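/- Behaviour of β for the SSL prior outside the monotonicity interval: with λ_1 = 0.05, for n large enough there exist constants c, C > 0 such that: (i) (g_1/g_0)(2λ_1) < 0.25; (ii) β(x) < 0 for all x ∈ [0, 2λ_1]; (iii) β(x) ≥ c·n/log n for all √(2 log n) ≤ x ≤ λ_0/2; (iv) β(x) ≥ c·e^{Cn²}·γ_1(n)/n for all x ≥ λ_0/8. -/

import Mathlib

/-!
Statement 18: behaviour of β for the SSL prior outside the monotonicity
interval.
-/

open MeasureTheory Real Set

noncomputable section

/-- Standard normal density. -/
def phi (x : ℝ) : ℝ := Real.exp (-x ^ 2 / 2) / Real.sqrt (2 * Real.pi)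

/-- Spike inverse-scale `λ₀ = 5√(2π) n`. -/
def lam0 (n : ℕ) : ℝ := 5 * Real.sqrt (2 * Real.pi) * n

/-- Slab scale parameter `λ₁ = 0.05`. -/
def lam1 : ℝ := 0.05

/-- Spike density: Laplace with parameter `λ₀`. -/
def gamma0 (n : ℕ) (x : ℝ) : ℝ := lam0 n / 2 * Real.exp (-(lam0 n) * |x|)

/-- Slab density: Cauchy with scale `1/λ₁`. -/
def gamma1 (x : ℝ) : ℝ := lam1 / Real.pi * (1 + lam1 ^ 2 * x ^ 2)⁻¹

/-- `g₀ = φ * γ₀`. -/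
def g0 (n : ℕ) (x : ℝ) : ℝ := ∫ u, phi (x - u) * gamma0 n u

/-- `g₁ = φ * γ₁`. -/
def g1 (x : ℝ) : ℝ := ∫ u, phi (x - u) * gamma1 u

/-- `β(x) = g₁(x)/g₀(x) - 1` for the SSL prior. -/
def betaSSL (n : ℕ) (x : ℝ) : ℝ := g1 x / g0 n x - 1

lemma sqrt_two_pi_ge : (2:ℝ) ≤ Real.sqrt (2 * Real.pi) := by
  apply Real.le_sqrt_of_sq_le
  nlinarith [Real.pi_gt_three]

lemma sqrt_two_pi_le : Real.sqrt (2 * Real.pi) ≤ 2.6 := by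
  rw [Real.sqrt_le_left (by norm_num)]
  nlinarith [Real.pi_lt_d2]

lemma phi_pos (x : ℝ) : 0 < phi x := by
  unfold phi
  positivity

lemma two_phi_le (x : ℝ) : 2 * phi x ≤ Real.exp (-x ^ 2 / 2) := by
  unfold phi
  have h := sqrt_two_pi_ge
  rw [← mul_div_assoc, div_le_iff₀ (by linarith)]
  nlinarith [Real.exp_pos (-x ^ 2 / 2)]

lemma phi_le (x : ℝ) : phi x ≤ Real.exp (-x ^ 2 / 2) := by
  have := two_phi_le x
  linarith [phi_pos x]

lemma phi_anti {x y : ℝ} (h : x ^ 2 ≤ y ^ 2) : phi y ≤ phi x := by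
  unfold phi
  gcongr

lemma phi_shift (x : ℝ) :
    (fun u => phi (x - u)) = ProbabilityTheory.gaussianPDFReal x 1 := by
  ext u
  simp only [phi, ProbabilityTheory.gaussianPDFReal, NNReal.coe_one, mul_one]
  rw [div_eq_inv_mul, show (x - u) ^ 2 = (u - x) ^ 2 by ring]

lemma phi_integrable (x : ℝ) : Integrable (fun u => phi (x - u)) := by
  rw [phi_shift]
  exact ProbabilityTheory.integrable_gaussianPDFReal x 1

lemma phi_integral (x : ℝ) : ∫ u, phi (x - u) = 1 := by
  have h := ProbabilityTheory.integral_gaussianPDFReal_eq_one x (v := 1) one_ne_zero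
  rw [← phi_shift] at h
  exact h

lemma phi_continuous : Continuous phi := by
  unfold phi
  fun_prop

lemma exp_abs_integral {a : ℝ} (ha : 0 < a) : ∫ u : ℝ, Real.exp (-a * |u|) = 2 / a := by
  rw [integral_comp_abs (f := fun u => Real.exp (-a * u)),
    integral_exp_mul_Ioi (by linarith)]
  simp
  field_simp

lemma exp_abs_integrable {a : ℝ} (ha : 0 < a) :
    Integrable (fun u : ℝ => Real.exp (-a * |u|)) := by
  apply Integrable.of_integral_ne_zero
  rw [exp_abs_integral ha]
  positivity

lemma gamma0_continuous (n : ℕ) : Continuous (gamma0 n) := by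
  unfold gamma0
  fun_prop

lemma gamma1_continuous : Continuous gamma1 := by
  unfold gamma1
  have : ∀ x : ℝ, 1 + lam1 ^ 2 * x ^ 2 ≠ 0 := fun x => by positivity
  fun_prop (disch := assumption)

lemma gamma1_pos (x : ℝ) : 0 < gamma1 x := by
  unfold gamma1 lam1
  positivity

lemma gamma1_le (x : ℝ) : gamma1 x ≤ lam1 / Real.pi := by
  unfold gamma1
  have h : (1 + lam1 ^ 2 * x ^ 2)⁻¹ ≤ 1 := inv_le_one_of_one_le₀ (by nlinarith [sq_nonneg (lam1 * x)])
  have : 0 ≤ lam1 / Real.pi := by unfold lam1; positivity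
  nlinarith

lemma gamma1_le_one (x : ℝ) : gamma1 x ≤ 1 := by
  refine (gamma1_le x).trans ?_
  rw [div_le_one Real.pi_pos]
  unfold lam1
  linarith [Real.pi_gt_three]

lemma lam0_ge (n : ℕ) : 10 * (n:ℝ) ≤ lam0 n := by
  unfold lam0
  have := sqrt_two_pi_ge
  have hn : (0:ℝ) ≤ n := n.cast_nonneg
  nlinarith

lemma lam0_le (n : ℕ) : lam0 n ≤ 13 * n := by
  unfold lam0
  have := sqrt_two_pi_le
  have hn : (0:ℝ) ≤ n := n.cast_nonneg
  nlinarith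

lemma lam0_sq (n : ℕ) : 150 * (n:ℝ) ^ 2 ≤ lam0 n ^ 2 := by
  unfold lam0
  rw [mul_pow, mul_pow, Real.sq_sqrt (by positivity)]
  have := Real.pi_gt_three
  have hn : (0:ℝ) ≤ (n:ℝ) ^ 2 := by positivity
  nlinarith

lemma gamma0_integrable {n : ℕ} (h : 0 < lam0 n) : Integrable (gamma0 n) :=
  (exp_abs_integrable h).const_mul _

lemma gamma0_integral {n : ℕ} (h : 0 < lam0 n) : ∫ u, gamma0 n u = 1 := by
  unfold gamma0
  rw [integral_const_mul, exp_abs_integral h]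
  field_simp

lemma gamma0_pos {n : ℕ} (h : 0 < lam0 n) (u : ℝ) : 0 < gamma0 n u := by
  unfold gamma0
  positivity

lemma g0_integrable {n : ℕ} (h : 0 < lam0 n) (x : ℝ) :
    Integrable (fun u => phi (x - u) * gamma0 n u) := by
  refine (gamma0_integrable h).mono' ?_ (Filter.Eventually.of_forall fun u => ?_)
  · exact ((phi_continuous.comp (by fun_prop)).mul (gamma0_continuous n)).aestronglyMeasurable
  · have h1 := phi_pos (x - u)
    have h2 := gamma0_pos h u
    have h3 : phi (x - u) ≤ 1 := (phi_le _).trans (Real.exp_le_one_iff.2 (by nlinarith [sq_nonneg (x - u)]))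
    rw [Real.norm_of_nonneg (by positivity)]
    nlinarith

lemma g1_integrable (x : ℝ) : Integrable (fun u => phi (x - u) * gamma1 u) := by
  refine (phi_integrable x).mono' ?_ (Filter.Eventually.of_forall fun u => ?_)
  · exact ((phi_continuous.comp (by fun_prop)).mul gamma1_continuous).aestronglyMeasurable
  · have h1 := phi_pos (x - u)
    have h2 := gamma1_pos u
    have h3 := gamma1_le_one u
    rw [Real.norm_of_nonneg (by positivity)]
    nlinarith

lemma g0_pos {n : ℕ} (h : 0 < lam0 n) (x : ℝ) : 0 < g0 n x := by
  unfold g0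
  have hp : ∀ u, 0 < phi (x - u) * gamma0 n u := fun u => mul_pos (phi_pos _) (gamma0_pos h u)
  rw [integral_pos_iff_support_of_nonneg (fun u => (hp u).le) (g0_integrable h x)]
  have : Function.support (fun u => phi (x - u) * gamma0 n u) = Set.univ := by
    ext u
    simp only [Function.mem_support, Set.mem_univ, iff_true]
    exact (hp u).ne'
  rw [this]
  simp

lemma g1_le (x : ℝ) : g1 x ≤ lam1 / Real.pi := by
  unfold g1
  calc ∫ u, phi (x - u) * gamma1 u ≤ ∫ u, phi (x - u) * (lam1 / Real.pi) := by
        refine integral_mono (g1_integrable x) ((phi_integrable x).mul_const _) fun u => ?_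
        exact mul_le_mul_of_nonneg_left (gamma1_le u) (phi_pos _).le
    _ = lam1 / Real.pi := by rw [integral_mul_const, phi_integral, one_mul]

lemma g1_ge {x : ℝ} (hx : 1 ≤ x) : phi 1 * gamma1 x ≤ g1 x := by
  unfold g1
  have h0 : ∀ u, 0 ≤ phi (x - u) * gamma1 u := fun u => (mul_pos (phi_pos _) (gamma1_pos u)).le
  calc phi 1 * gamma1 x = ∫ u in Set.Icc (x-1) x, phi 1 * gamma1 x := by simp
    _ ≤ ∫ u in Set.Icc (x-1) x, phi (x - u) * gamma1 u := by
        refine setIntegral_mono_on (integrableOn_const (by simp)) (g1_integrable x).integrableOn measurableSet_Icc ?_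
        rintro u ⟨hu1, hu2⟩
        refine mul_le_mul (phi_anti (by nlinarith)) ?_ (gamma1_pos _).le (phi_pos _).le
        unfold gamma1 lam1
        have : u ^ 2 ≤ x ^ 2 := by nlinarith
        gcongr
    _ ≤ _ := setIntegral_le_integral (g1_integrable x) (Filter.Eventually.of_forall h0)

lemma g0_ge {n : ℕ} (h : 0 < lam0 n) {x : ℝ} (hx : x ∈ Set.Icc (0:ℝ) (2 * lam1)) :
    phi 1 * ((1 - Real.exp (-lam0 n)) / 2) ≤ g0 n x := by
  unfold g0
  have h0 : ∀ u, 0 ≤ phi (x - u) * gamma0 n u := fun u => (mul_pos (phi_pos _) (gamma0_pos h u)).le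
  have e : ∫ u in (0:ℝ)..1, Real.exp (-lam0 n * u) = (1 - Real.exp (-lam0 n)) / lam0 n := by
    rw [intervalIntegral.integral_comp_mul_left (fun u => Real.exp u) (by linarith : -lam0 n ≠ 0)]
    simp
    field_simp
    ring
  calc phi 1 * ((1 - Real.exp (-lam0 n)) / 2)
      = ∫ u in Set.Ioc (0:ℝ) 1, phi 1 * (lam0 n / 2 * Real.exp (-lam0 n * u)) := by
        rw [integral_const_mul, integral_const_mul, ← intervalIntegral.integral_of_le zero_le_one, e]
        field_simp
    _ = ∫ u in Set.Ioc (0:ℝ) 1, phi 1 * gamma0 n u := by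
        refine setIntegral_congr_fun measurableSet_Ioc fun u hu => ?_
        simp only [gamma0, abs_of_pos hu.1]
    _ ≤ ∫ u in Set.Ioc (0:ℝ) 1, phi (x - u) * gamma0 n u := by
        refine setIntegral_mono_on ((gamma0_integrable h).const_mul _).integrableOn
          (g0_integrable h x).integrableOn measurableSet_Ioc ?_
        rintro u ⟨hu1, hu2⟩
        refine mul_le_mul_of_nonneg_right (phi_anti ?_) (gamma0_pos h u).le
        obtain ⟨hx1, hx2⟩ := hx
        unfold lam1 at hx2
        nlinarith
    _ ≤ _ := setIntegral_le_integral (g0_integrable h x) (Filter.Eventually.of_forall h0)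

lemma g0_le_small {n : ℕ} (h : 0 < lam0 n) {x : ℝ} (hx0 : 0 ≤ x) (hx : x ≤ lam0 n / 2) :
    g0 n x ≤ Real.exp (-x ^ 2 / 2) := by
  refine le_trans ?_ (two_phi_le x)
  unfold g0
  have ha : 0 < lam0 n / 2 := by linarith
  calc ∫ u, phi (x - u) * gamma0 n u
      ≤ ∫ u, phi x * (lam0 n / 2) * Real.exp (-(lam0 n / 2) * |u|) := by
        refine integral_mono (g0_integrable h x) ((exp_abs_integrable ha).const_mul _) fun u => ?_
        have e : Real.exp (-(x - u) ^ 2 / 2) * Real.exp (-lam0 n * |u|) ≤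
            Real.exp (-x ^ 2 / 2) * Real.exp (-(lam0 n / 2) * |u|) := by
          rw [← Real.exp_add, ← Real.exp_add, Real.exp_le_exp]
          have h1 : x * u ≤ lam0 n / 2 * |u| :=
            (mul_le_mul_of_nonneg_left (le_abs_self u) hx0).trans
              (mul_le_mul_of_nonneg_right hx (abs_nonneg u))
          nlinarith [sq_nonneg u]
        simp only [phi, gamma0]
        have hc : 0 ≤ lam0 n / 2 / Real.sqrt (2 * Real.pi) := by positivity
        calc _ = lam0 n / 2 / Real.sqrt (2 * Real.pi) *
              (Real.exp (-(x - u) ^ 2 / 2) * Real.exp (-lam0 n * |u|)) := by ring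
          _ ≤ _ := mul_le_mul_of_nonneg_left e hc
          _ = _ := by ring
    _ = 2 * phi x := by
        rw [integral_const_mul, exp_abs_integral ha]
        field_simp

lemma g0_le_large {n : ℕ} (h : 0 < lam0 n) {x : ℝ} (hx : lam0 n / 8 ≤ x) :
    g0 n x ≤ Real.exp (-(lam0 n * x / 64)) * (1 + lam0 n / 2) := by
  unfold g0
  have hx0 : 0 < x := by linarith
  have hE := Real.exp_pos (-(lam0 n * x / 64))
  calc ∫ u, phi (x - u) * gamma0 n u
      ≤ ∫ u, Real.exp (-(lam0 n * x / 64)) * (gamma0 n u + lam0 n / 2 * phi (x - u)) := by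
        refine integral_mono (g0_integrable h x)
          (((gamma0_integrable h).add ((phi_integrable x).const_mul _)).const_mul _) fun u => ?_
        have p1 := phi_pos (x - u)
        have p2 := gamma0_pos h u
        rcases le_total |u| (x / 2) with hu | hu
        · have hu' := le_abs_self u
          have : phi (x - u) ≤ Real.exp (-(lam0 n * x / 64)) := by
            refine (phi_le _).trans (Real.exp_le_exp.2 ?_)
            have : x / 2 ≤ x - u := by linarith
            nlinarith
          calc phi (x - u) * gamma0 n u ≤ Real.exp (-(lam0 n * x / 64)) * gamma0 n u :=
                mul_le_mul_of_nonneg_right this p2.le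
            _ ≤ _ := by
                refine mul_le_mul_of_nonneg_left ?_ hE.le
                have : 0 ≤ lam0 n / 2 * phi (x - u) := by positivity
                linarith
        · have : gamma0 n u ≤ lam0 n / 2 * Real.exp (-(lam0 n * x / 64)) := by
            unfold gamma0
            refine mul_le_mul_of_nonneg_left (Real.exp_le_exp.2 ?_) (by linarith)
            nlinarith [mul_pos h hx0]
          calc phi (x - u) * gamma0 n u
                ≤ phi (x - u) * (lam0 n / 2 * Real.exp (-(lam0 n * x / 64))) :=
                mul_le_mul_of_nonneg_left this p1.le
            _ = Real.exp (-(lam0 n * x / 64)) * (lam0 n / 2 * phi (x - u)) := by ring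
            _ ≤ _ := by
                refine mul_le_mul_of_nonneg_left ?_ hE.le
                linarith
    _ = _ := by
        rw [integral_const_mul, integral_add (gamma0_integrable h) ((phi_integrable x).const_mul _),
          integral_const_mul, gamma0_integral h, phi_integral, mul_one]

lemma part_one {n : ℕ} (hn : 13 ≤ n) {x : ℝ} (hx : x ∈ Set.Icc (0:ℝ) (2 * lam1)) :
    g1 x / g0 n x < 0.25 := by
  have hn' : (13:ℝ) ≤ n := by exact_mod_cast hn
  have hL := lam0_ge n
  have h : 0 < lam0 n := by linarith
  rw [div_lt_iff₀ (g0_pos h x)]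
  have hexp : Real.exp (-lam0 n) ≤ 0.1 := by
    rw [Real.exp_neg]
    refine inv_le_of_inv_le₀ (by norm_num) ?_
    have := Real.add_one_le_exp (lam0 n)
    norm_num
    linarith
  have hphi : 0.19 ≤ phi 1 := by
    unfold phi
    rw [le_div_iff₀ (by positivity)]
    have := sqrt_two_pi_le
    have := Real.add_one_le_exp (-1 ^ 2 / 2 : ℝ)
    have e : (-1 ^ 2 / 2 : ℝ) = -0.5 := by norm_num
    rw [e] at this ⊢
    linarith
  have h1 := g1_le x
  have h2 := g0_ge h hx
  have h3 : lam1 / Real.pi < 0.017 := by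
    unfold lam1
    rw [div_lt_iff₀ Real.pi_pos]
    linarith [Real.pi_gt_three]
  have h4 : 0.19 * 0.45 ≤ phi 1 * ((1 - Real.exp (-lam0 n)) / 2) := by
    refine mul_le_mul hphi (by linarith) (by norm_num) (phi_pos _).le
  linarith

/-- The constant used for the lower bounds. -/
def KK : ℝ := phi 1 * (lam1 / Real.pi)

lemma KK_pos : 0 < KK := by
  unfold KK lam1
  have := phi_pos 1
  positivity

lemma ratio_ge {n : ℕ} (h : 0 < lam0 n) {x B : ℝ} (hx : 1 ≤ x) (hB : g0 n x ≤ B) :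
    KK / ((1 + lam1 ^ 2 * x ^ 2) * B) ≤ g1 x / g0 n x := by
  have h1 := g1_ge hx
  have h2 := g0_pos h x
  have hp : 0 ≤ phi 1 * gamma1 x := (mul_pos (phi_pos 1) (gamma1_pos x)).le
  have : KK / ((1 + lam1 ^ 2 * x ^ 2) * B) = phi 1 * gamma1 x / B := by
    unfold KK gamma1
    rw [div_mul_eq_div_div]
    ring
  rw [this]
  exact div_le_div₀ (hp.trans h1) h1 h2 hB

lemma part_three {n : ℕ} (hn : 13 ≤ n) (hlog : Real.log n ≤ KK / 4 * n) {x : ℝ}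
    (h1 : Real.sqrt (2 * Real.log n) ≤ x) (h2 : x ≤ lam0 n / 2) :
    KK / 4 * n / Real.log n ≤ betaSSL n x := by
  have hn' : (13:ℝ) ≤ n := by exact_mod_cast hn
  have hL := lam0_ge n
  have h : 0 < lam0 n := by linarith
  have hs : 1 ≤ Real.log n := by
    rw [Real.le_log_iff_exp_le (by linarith)]
    linarith [Real.exp_one_lt_d9]
  have hx0 : 0 ≤ x := (Real.sqrt_nonneg _).trans h1
  have hx2 : 2 * Real.log n ≤ x ^ 2 := (Real.sqrt_le_left hx0).1 h1
  have hx : 1 ≤ x := by nlinarith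
  have hr := ratio_ge h hx (g0_le_small h hx0 h2)
  have hK := KK_pos
  have he : Real.exp (x ^ 2 / 2) * Real.exp (-x ^ 2 / 2) = 1 := by
    rw [← Real.exp_add]
    simp
    ring
  have he2 : (n:ℝ) * (1 + (x ^ 2 / 2 - Real.log n)) ≤ Real.exp (x ^ 2 / 2) := by
    have e1 : Real.exp (x ^ 2 / 2) = n * Real.exp (x ^ 2 / 2 - Real.log n) := by
      rw [Real.exp_sub, Real.exp_log (by linarith)]
      field_simp
    rw [e1]
    have := Real.add_one_le_exp (x ^ 2 / 2 - Real.log n)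
    gcongr
    linarith
  have key : KK / 2 * n / Real.log n ≤
      KK / ((1 + lam1 ^ 2 * x ^ 2) * Real.exp (-x ^ 2 / 2)) := by
    rw [div_le_div_iff₀ (by linarith) (by positivity)]
    have hA : (n:ℝ) * (1 + lam1 ^ 2 * x ^ 2) ≤ 2 * Real.log n * Real.exp (x ^ 2 / 2) := by
      calc (n:ℝ) * (1 + lam1 ^ 2 * x ^ 2)
          ≤ 2 * Real.log n * (n * (1 + (x ^ 2 / 2 - Real.log n))) := by
            unfold lam1
            have : 1 + 0.05 ^ 2 * x ^ 2 ≤ 2 * Real.log n * (1 + (x ^ 2 / 2 - Real.log n)) := by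
              nlinarith
            nlinarith
        _ ≤ _ := by gcongr
    calc KK / 2 * n * ((1 + lam1 ^ 2 * x ^ 2) * Real.exp (-x ^ 2 / 2))
        = KK / 2 * Real.exp (-x ^ 2 / 2) * (n * (1 + lam1 ^ 2 * x ^ 2)) := by ring
      _ ≤ KK / 2 * Real.exp (-x ^ 2 / 2) * (2 * Real.log n * Real.exp (x ^ 2 / 2)) := by gcongr
      _ = KK * Real.log n * (Real.exp (x ^ 2 / 2) * Real.exp (-x ^ 2 / 2)) := by ring
      _ = KK * Real.log n := by rw [he, mul_one]
  have hone : 1 ≤ KK / 4 * n / Real.log n := by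
    rw [le_div_iff₀ (by linarith)]
    linarith
  have : KK / 2 * n / Real.log n = KK / 4 * n / Real.log n + KK / 4 * n / Real.log n := by ring
  unfold betaSSL
  linarith

lemma part_four {n : ℕ} (hn : 13 ≤ n) (hbig : 300 / KK ≤ n) {x : ℝ}
    (hx : lam0 n / 8 ≤ x) : Real.exp (0.05 * n ^ 2) ≤ betaSSL n x := by
  have hn' : (13:ℝ) ≤ n := by exact_mod_cast hn
  have hL := lam0_ge n
  have hL2 := lam0_le n
  have h : 0 < lam0 n := by linarith
  have hx1 : 1 ≤ x := by linarith
  have hr := ratio_ge h hx1 (g0_le_large h hx)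
  have hK := KK_pos
  rw [div_le_iff₀ hK] at hbig
  set E := Real.exp (0.05 * n ^ 2) with hE
  have hE1 : 1 + 0.05 * (n:ℝ) ^ 2 ≤ E := by
    have := Real.add_one_le_exp (0.05 * (n:ℝ) ^ 2)
    linarith
  have hB : 2 * (1 + lam0 n / 2) ≤ KK * E := by
    have : KK * (0.05 * (n:ℝ) ^ 2) ≤ KK * E := by
      gcongr
      linarith
    nlinarith
  have hexp : E * E * (1 + lam1 ^ 2 * x ^ 2) ≤ Real.exp (lam0 n * x / 64) := by
    have q : 1 + lam1 ^ 2 * x ^ 2 ≤ Real.exp x := by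
      have := Real.quadratic_le_exp_of_nonneg (by linarith : 0 ≤ x)
      unfold lam1
      nlinarith
    calc E * E * (1 + lam1 ^ 2 * x ^ 2) ≤ E * E * Real.exp x := by gcongr
      _ = Real.exp (0.05 * n ^ 2 + 0.05 * n ^ 2 + x) := by rw [Real.exp_add, Real.exp_add]
      _ ≤ _ := by
        rw [Real.exp_le_exp]
        have := lam0_sq n
        have a1 : lam0 n * (lam0 n / 8) ≤ lam0 n * x := by gcongr
        have a2 : 128 * x ≤ lam0 n * x := by
          gcongr
          linarith
        nlinarith
  have he : Real.exp (lam0 n * x / 64) * Real.exp (-(lam0 n * x / 64)) = 1 := by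
    rw [← Real.exp_add]
    simp
  have key : 2 * E ≤ KK / ((1 + lam1 ^ 2 * x ^ 2) *
      (Real.exp (-(lam0 n * x / 64)) * (1 + lam0 n / 2))) := by
    rw [le_div_iff₀ (by positivity)]
    calc 2 * E * ((1 + lam1 ^ 2 * x ^ 2) * (Real.exp (-(lam0 n * x / 64)) * (1 + lam0 n / 2)))
        = E * (1 + lam1 ^ 2 * x ^ 2) * Real.exp (-(lam0 n * x / 64)) * (2 * (1 + lam0 n / 2)) := by
          ring
      _ ≤ E * (1 + lam1 ^ 2 * x ^ 2) * Real.exp (-(lam0 n * x / 64)) * (KK * E) := by gcongr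
      _ = KK * Real.exp (-(lam0 n * x / 64)) * (E * E * (1 + lam1 ^ 2 * x ^ 2)) := by ring
      _ ≤ KK * Real.exp (-(lam0 n * x / 64)) * Real.exp (lam0 n * x / 64) := by gcongr
      _ = KK * (Real.exp (lam0 n * x / 64) * Real.exp (-(lam0 n * x / 64))) := by ring
      _ = KK := by rw [he, mul_one]
  have : 1 ≤ E := by nlinarith
  unfold betaSSL
  linarith

lemma KK_le_one : KK ≤ 1 := by
  unfold KK
  have h1 : phi 1 ≤ 1 := (phi_le 1).trans (Real.exp_le_one_iff.2 (by norm_num))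
  have h2 : lam1 / Real.pi ≤ 1 := by
    rw [div_le_one Real.pi_pos]
    unfold lam1
    linarith [Real.pi_gt_three]
  exact mul_le_one₀ h1 (by unfold lam1; positivity) h2

/-- Lemma: behaviour of `β` for the SSL prior.  With
`λ₁ = 0.05`, for `n` large enough there exist `c, C > 0` with:
`(g₁/g₀)(2λ₁) < 0.25`; `β < 0` on `[0, 2λ₁]`; `β(x) ≥ c n / log n` for
`√(2 log n) ≤ x ≤ λ₀/2`; and `β(x) ≥ c e^{C n²} γ₁(n)/n` for `x ≥ λ₀/8`. -/
theorem betaSSL_outside_bounds :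
    ∃ c > (0 : ℝ), ∃ C > (0 : ℝ), ∃ N0 : ℕ, ∀ n : ℕ, N0 ≤ n →
      g1 (2 * lam1) / g0 n (2 * lam1) < 0.25 ∧
      (∀ x ∈ Set.Icc (0 : ℝ) (2 * lam1), betaSSL n x < 0) ∧
      (∀ x : ℝ, Real.sqrt (2 * Real.log n) ≤ x → x ≤ lam0 n / 2 →
        c * n / Real.log n ≤ betaSSL n x) ∧
      (∀ x : ℝ, lam0 n / 8 ≤ x →
        c * Real.exp (C * n ^ 2) * gamma1 n / n ≤ betaSSL n x) := by
  have hK := KK_pos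
  have hev : ∀ᶠ n : ℕ in Filter.atTop, Real.log n ≤ KK / 4 * n := by
    have h := (Real.isLittleO_log_id_atTop.bound (by positivity : 0 < KK / 4))
    filter_upwards [tendsto_natCast_atTop_atTop.eventually h] with n hn
    simp only [id, Real.norm_eq_abs, Nat.abs_cast] at hn
    exact (le_abs_self _).trans hn
  have hev2 : ∀ᶠ n : ℕ in Filter.atTop, 300 / KK ≤ n :=
    tendsto_natCast_atTop_atTop.eventually (Filter.eventually_ge_atTop _)
  obtain ⟨N, hN⟩ := Filter.eventually_atTop.1
    ((hev.and hev2).and (Filter.eventually_ge_atTop 13))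
  refine ⟨KK / 4, by positivity, 0.05, by norm_num, N, fun n hn => ?_⟩
  obtain ⟨⟨ha, hb⟩, hc⟩ := hN n hn
  have hn' : (13:ℝ) ≤ n := by exact_mod_cast hc
  refine ⟨part_one hc ⟨by unfold lam1; norm_num, le_rfl⟩, fun x hx => ?_,
    fun x h1 h2 => part_three hc ha h1 h2, fun x hx => ?_⟩
  · have := part_one hc hx
    unfold betaSSL
    norm_num at this ⊢
    linarith
  · refine le_trans ?_ (part_four hc hb hx)
    have h1 := gamma1_le_one n
    have h2 := gamma1_pos n
    have h3 := KK_le_one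
    have hE := Real.exp_pos (0.05 * (n:ℝ) ^ 2)
    rw [div_le_iff₀ (by linarith)]
    calc KK / 4 * Real.exp (0.05 * n ^ 2) * gamma1 n
        ≤ 1 * Real.exp (0.05 * n ^ 2) * 1 := by
          gcongr
          linarith
      _ ≤ Real.exp (0.05 * n ^ 2) * n := by nlinarith

end
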